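/- Let φ: S_{m−1} → S_m be defined by φ(π_1π_2⋯π_{m−1}) = (π_1+1)(π_2+1)⋯(π_{m−1}+1)·1. For every n ≥ 4, the set S_n(312;123) of permutations of {1,…,n} avoiding 312 and containing 123 exactly once equals {φ(π) : π ∈ S_{n−1}(312;123)} ∪ {1 (n−1) n (n−2) (n−3) ⋯ 3 2, (n−2) (n−1) (n−3) (n−4) ⋯ 2 1 n}, the two listed words being the permutations 1,n−1,n,n−2,n−3,…,3,2 and n−2,n−1,n−3,n−4,…,2,1,n. -/

import Mathlib

/-- Number of occurrences of the pattern `α ∈ S_k` in the permutation `π ∈ S_n`: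
the number of strictly increasing choices of `k` indices such that the corresponding
subword of `π` is order-isomorphic to `α`. -/
noncomputable def occCount {k n : ℕ} (α : Equiv.Perm (Fin k)) (π : Equiv.Perm (Fin n)) : ℕ :=
  Nat.card {f : Fin k → Fin n // StrictMono f ∧ ∀ a b : Fin k, α a < α b ↔ π (f a) < π (f b)}

/-- `π` avoids the pattern `α`. -/
def avoids {k n : ℕ} (α : Equiv.Perm (Fin k)) (π : Equiv.Perm (Fin n)) : Prop :=
  occCount α π = 0

/-- `π` contains the pattern `α` exactly once. -/
def containsOnce {k n : ℕ} (α : Equiv.Perm (Fin k)) (π : Equiv.Perm (Fin n)) : Prop :=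
  occCount α π = 1

/-- The pattern `123` (as a permutation of `Fin 3`, 0-indexed). -/
def p123 : Equiv.Perm (Fin 3) := ⟨![0,1,2], ![0,1,2], by decide, by decide⟩
/-- The pattern `132`. -/
def p132 : Equiv.Perm (Fin 3) := ⟨![0,2,1], ![0,2,1], by decide, by decide⟩
/-- The pattern `213`. -/
def p213 : Equiv.Perm (Fin 3) := ⟨![1,0,2], ![1,0,2], by decide, by decide⟩
/-- The pattern `231`. -/
def p231 : Equiv.Perm (Fin 3) := ⟨![1,2,0], ![2,0,1], by decide, by decide⟩
/-- The pattern `312`. -/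
def p312 : Equiv.Perm (Fin 3) := ⟨![2,0,1], ![1,2,0], by decide, by decide⟩
/-- The pattern `321`. -/
def p321 : Equiv.Perm (Fin 3) := ⟨![2,1,0], ![2,1,0], by decide, by decide⟩

/-- `s_n(α;β)`: the number of permutations of `{1,…,n}` that avoid `α` and contain `β`
exactly once. -/
noncomputable def sAvoidContain (α β : Equiv.Perm (Fin 3)) (n : ℕ) : ℕ :=
  Nat.card {π : Equiv.Perm (Fin n) // avoids α π ∧ containsOnce β π}

/-- `s_n(∅;{α,β})`: the number of permutations of `{1,…,n}` that contain each of `α` and `β`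
exactly once. -/
noncomputable def sContainBoth (α β : Equiv.Perm (Fin 3)) (n : ℕ) : ℕ :=
  Nat.card {π : Equiv.Perm (Fin n) // containsOnce α π ∧ containsOnce β π}

/-- `φ : S_m → S_{m+1}` appends a new smallest element at the end:
`φ(π₁…π_m) = (π₁+1)(π₂+1)⋯(π_m+1)·1`. -/
def phi {m : ℕ} (π : Equiv.Perm (Fin m)) : Equiv.Perm (Fin (m + 1)) where
  toFun i := Fin.lastCases 0 (fun j => (π j).succ) i
  invFun v := Fin.cases (Fin.last m) (fun j => (π.symm j).castSucc) v
  left_inv i := by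
    induction i using Fin.lastCases with
    | last => simp
    | cast j => simp
  right_inv v := by
    induction v using Fin.cases with
    | zero => simp
    | succ j => simp

/-- `S_n(α;β)`: the set of permutations of `{1,…,n}` avoiding `α` and containing `β`
exactly once. -/
def SnAvoidContain (α β : Equiv.Perm (Fin 3)) (n : ℕ) : Set (Equiv.Perm (Fin n)) :=
  {π | avoids α π ∧ containsOnce β π}

/-- `S_n(∅;{α,β})`: the set of permutations of `{1,…,n}` containing each of `α` and `β`
exactly once. -/
def SnContainBoth (α β : Equiv.Perm (Fin 3)) (n : ℕ) : Set (Equiv.Perm (Fin n)) :=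
  {π | containsOnce α π ∧ containsOnce β π}

/-- `π` is the permutation whose one-line word (1-indexed positions, values in `{1,…,n}`)
is given by `w`. -/
def hasWord {n : ℕ} (π : Equiv.Perm (Fin n)) (w : ℕ → ℕ) : Prop :=
  ∀ j : Fin n, (π j : ℕ) + 1 = w ((j : ℕ) + 1)

/-!
Let `σ ∈ S_n(312;123)` take its minimum at the position `k`. Avoiding `312` makes every entry
before `k` smaller than every entry after `k`. If `k` is neither the first nor the last position,
these comparisons complete so many occurrences of `123` that `k` must be the last position but one
and `σ` must end with its maximum. So `σ` ends with its minimum, and lies in the image of `φ`, or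
it starts with its minimum, or it ends with its maximum. In the last two cases, removing that
entry turns "exactly one `123`" into "exactly one `12`", and the only way to avoid `312` while
containing `12` once is to have the word `(m-1) m (m-2) ⋯ 2 1`.
-/

section Patterns

variable {ι β : Type*} [LinearOrder ι] [LinearOrder β]

/-- The word `f` has no occurrence of the pattern `312`. Positions range over any linear order, so
that subwords of a permutation are covered without relabelling their values. -/
def Avoids312 (f : ι → β) : Prop :=
  ∀ i j k, i < j → j < k → f j < f k → ¬ f k < f i

/-- The positions `i`, `j` form an occurrence of the pattern `12` in the word `f`. -/
def IsNoninversion (f : ι → β) (i j : ι) : Prop :=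
  i < j ∧ f i < f j

/-- The positions `i`, `j`, `k` form an occurrence of the pattern `123` in the word `f`. -/
def IsIncreasingTriple (f : ι → β) (i j k : ι) : Prop :=
  IsNoninversion f i j ∧ IsNoninversion f j k

/-- The word `f` contains the pattern `12` exactly once. -/
def HasUniqueNoninversion (f : ι → β) : Prop :=
  ∃ a b, ∀ i j, IsNoninversion f i j ↔ i = a ∧ j = b

/-- The word `f` contains the pattern `123` exactly once. -/
def HasUniqueIncreasingTriple (f : ι → β) : Prop :=
  ∃ a b c, ∀ i j k, IsIncreasingTriple f i j k ↔ i = a ∧ j = b ∧ k = c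

variable {f : ι → β} {a b : ι}

theorem covBy_of_unique_noninversion (h : ∀ i j, IsNoninversion f i j ↔ i = a ∧ j = b) :
    a ⋖ b := by
  obtain ⟨hab, hfab⟩ := (h a b).2 ⟨rfl, rfl⟩
  refine ⟨hab, fun x hax hxb => ?_⟩
  rcases lt_or_ge (f a) (f x) with hfx | hfx
  · exact hxb.ne ((h a x).1 ⟨hax, hfx⟩).2
  · exact hax.ne' ((h x b).1 ⟨hxb, hfx.trans_lt hfab⟩).1

theorem isBot_of_unique_noninversion (hf : f.Injective) (h312 : Avoids312 f)
    (h : ∀ i j, IsNoninversion f i j ↔ i = a ∧ j = b) : IsBot a := by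
  obtain ⟨hab, hfab⟩ := (h a b).2 ⟨rfl, rfl⟩
  refine fun x => le_of_not_gt fun hxa => ?_
  have hxb : x < b := hxa.trans hab
  have hfxb : ¬ f x < f b := fun hfx => hxa.ne ((h x b).1 ⟨hxb, hfx⟩).1
  exact h312 x a b hxa hab hfab ((hf.ne hxb.ne).lt_or_gt.resolve_left hfxb)

theorem avoids312_and_hasUniqueNoninversion_iff {n : ℕ} {f : Fin (n + 2) → β}
    (hf : f.Injective) :
    Avoids312 f ∧ HasUniqueNoninversion f ↔ ∀ i j, IsNoninversion f i j ↔ i = 0 ∧ j = 1 := by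
  refine ⟨fun ⟨h312, a, b, h⟩ => ?_, fun h => ⟨fun i j k hij hjk hfjk _ => ?_, 0, 1, h⟩⟩
  · obtain rfl : a = 0 := (isBot_of_unique_noninversion hf h312 h).eq_bot
    obtain rfl : b = 1 := (covBy_of_unique_noninversion h).unique_right (by simp [Fin.covBy_iff])
    exact h
  · exact (Fin.zero_le i).not_gt (((h j k).1 ⟨hjk, hfjk⟩).1 ▸ hij)

theorem eq_and_eq_or_lt_of_unique_noninversion
    (h : ∀ i j, IsNoninversion f i j ↔ i = a ∧ j = b) {i j : ι} (hij : f i < f j) :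
    i = a ∧ j = b ∨ j < i ∧ ¬ (j = a ∧ i = b) := by
  rcases lt_trichotomy i j with hlt | rfl | hgt
  · exact .inl ((h i j).1 ⟨hlt, hij⟩)
  · exact absurd hij (lt_irrefl _)
  · exact .inr ⟨hgt, fun hji => hij.not_gt ((h j i).2 hji).2⟩

variable {k : ι}

theorem Avoids312.lt_of_lt_of_lt (hf : f.Injective) (h312 : Avoids312 f) (hk : ∀ i, f k ≤ f i)
    {p q : ι} (hpk : p < k) (hkq : k < q) : f p < f q :=
  (hf.ne (hpk.trans hkq).ne).lt_or_gt.resolve_right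
    (h312 p k q hpk hkq ((hk q).lt_of_ne (hf.ne hkq.ne)))

theorem eq_bot_or_eq_top_or_forall_le_top [BoundedOrder ι] (hf : f.Injective)
    (h312 : Avoids312 f) (h123 : HasUniqueIncreasingTriple f) (hk : ∀ i, f k ≤ f i) :
    k = ⊥ ∨ k = ⊤ ∨ ∀ i, f i ≤ f ⊤ := by
  obtain ⟨a, b, c, h⟩ := h123
  obtain ⟨⟨hab, hfab⟩, hbc, hfbc⟩ := (h a b c).2 ⟨rfl, rfl, rfl⟩
  refine or_iff_not_imp_left.2 fun hbot => or_iff_not_imp_left.2 fun htop => ?_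
  replace hbot : ⊥ < k := bot_lt_iff_ne_bot.2 hbot
  replace htop : k < ⊤ := lt_top_iff_ne_top.2 htop
  have hcross : ∀ {p q}, p < k → k < q → f p < f q := h312.lt_of_lt_of_lt hf hk
  have hbk : b < k := by
    by_contra! hkb
    have hkb : k < b := hkb.lt_of_ne fun hkb => (hkb ▸ hk a).not_gt hfab
    have hbot_eq : ⊥ = a := ((h ⊥ b c).1 ⟨⟨hbot.trans hkb, hcross hbot hkb⟩, hbc, hfbc⟩).1
    have hk_eq : k = a :=
      ((h k b c).1 ⟨⟨hkb, (hk b).lt_of_ne (hf.ne hkb.ne)⟩, hbc, hfbc⟩).1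
    exact hbot.ne (hbot_eq.trans hk_eq.symm)
  have eq_c : ∀ q, k < q → q = c := fun q hkq =>
    ((h a b q).1 ⟨⟨hab, hfab⟩, hbk.trans hkq, hcross hbk hkq⟩).2.2
  intro i
  rcases lt_trichotomy i k with hik | rfl | hki
  · exact (hcross hik htop).le
  · exact hk ⊤
  · rw [eq_c i hki, eq_c ⊤ htop]

end Patterns

section RemoveExtremum

variable {β : Type*} [LinearOrder β] {n : ℕ} {f : Fin (n + 1) → β}

theorem avoids312_iff_comp_succ (h0 : ∀ i, f 0 ≤ f i) :
    Avoids312 f ↔ Avoids312 (f ∘ Fin.succ) := by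
  refine ⟨fun h i j k hij hjk => h _ _ _ (Fin.succ_lt_succ_iff.2 hij) (Fin.succ_lt_succ_iff.2 hjk),
    fun h i j k hij hjk hfjk => ?_⟩
  cases i using Fin.cases with
  | zero => exact (h0 k).not_gt
  | succ i =>
    obtain ⟨j, rfl⟩ := Fin.exists_succ_eq_of_ne_zero hij.ne_bot
    obtain ⟨k, rfl⟩ := Fin.exists_succ_eq_of_ne_zero hjk.ne_bot
    exact h i j k (Fin.succ_lt_succ_iff.1 hij) (Fin.succ_lt_succ_iff.1 hjk) hfjk

theorem avoids312_iff_comp_castSucc (hlast : ∀ i, f i ≤ f (Fin.last n)) :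
    Avoids312 f ↔ Avoids312 (f ∘ Fin.castSucc) := by
  refine ⟨fun h i j k hij hjk => h _ _ _ hij hjk, fun h i j k hij hjk hfjk => ?_⟩
  cases k using Fin.lastCases with
  | last => exact (hlast i).not_gt
  | cast k =>
    obtain ⟨j, rfl⟩ := Fin.exists_castSucc_eq.2 (hjk.trans (Fin.castSucc_lt_last k)).ne
    obtain ⟨i, rfl⟩ := Fin.exists_castSucc_eq.2 (hij.trans (Fin.castSucc_lt_last j)).ne
    exact h i j k hij hjk hfjk

theorem isNoninversion_comp_succ {i j : Fin n} :
    IsNoninversion (f ∘ Fin.succ) i j ↔ IsNoninversion f i.succ j.succ := by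
  simp only [IsNoninversion, Function.comp_apply, Fin.succ_lt_succ_iff]

theorem isNoninversion_comp_castSucc {i j : Fin n} :
    IsNoninversion (f ∘ Fin.castSucc) i j ↔ IsNoninversion f i.castSucc j.castSucc := by
  simp only [IsNoninversion, Function.comp_apply, Fin.castSucc_lt_castSucc_iff]

theorem hasUniqueIncreasingTriple_iff_comp_succ (h0 : ∀ i : Fin n, f 0 < f i.succ) :
    HasUniqueIncreasingTriple f ↔ HasUniqueNoninversion (f ∘ Fin.succ) := by
  have prepend (i j : Fin n) :
      IsIncreasingTriple f 0 i.succ j.succ ↔ IsNoninversion (f ∘ Fin.succ) i j := by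
    rw [isNoninversion_comp_succ]
    exact and_iff_right ⟨i.succ_pos, h0 i⟩
  constructor
  · rintro ⟨a, b, c, h⟩
    obtain ⟨hab, hbc⟩ := (h a b c).2 ⟨rfl, rfl, rfl⟩
    obtain ⟨b, rfl⟩ := Fin.exists_succ_eq_of_ne_zero hab.1.ne_bot
    obtain ⟨c, rfl⟩ := Fin.exists_succ_eq_of_ne_zero hbc.1.ne_bot
    obtain rfl : 0 = a :=
      ((h _ _ _).1 ((prepend b c).2 (isNoninversion_comp_succ.2 hbc))).1
    exact ⟨b, c, fun i j => by rw [← prepend, h]; simp⟩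
  · rintro ⟨b, c, h⟩
    refine ⟨0, b.succ, c.succ, fun i j k => ⟨fun ⟨hij, hjk⟩ => ?_, ?_⟩⟩
    · obtain ⟨j, rfl⟩ := Fin.exists_succ_eq_of_ne_zero hij.1.ne_bot
      obtain ⟨k, rfl⟩ := Fin.exists_succ_eq_of_ne_zero hjk.1.ne_bot
      obtain ⟨rfl, rfl⟩ := (h j k).1 (isNoninversion_comp_succ.2 hjk)
      refine ⟨by_contra fun hi => ?_, rfl, rfl⟩
      obtain ⟨i, rfl⟩ := Fin.exists_succ_eq_of_ne_zero hi
      exact hjk.1.ne (congrArg _ ((h i j).1 (isNoninversion_comp_succ.2 hij)).2)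
    · rintro ⟨rfl, rfl, rfl⟩
      exact (prepend b c).2 ((h b c).2 ⟨rfl, rfl⟩)

theorem hasUniqueIncreasingTriple_iff_comp_castSucc
    (hlast : ∀ i : Fin n, f i.castSucc < f (Fin.last n)) :
    HasUniqueIncreasingTriple f ↔ HasUniqueNoninversion (f ∘ Fin.castSucc) := by
  have append (i j : Fin n) : IsIncreasingTriple f i.castSucc j.castSucc (Fin.last n) ↔
      IsNoninversion (f ∘ Fin.castSucc) i j := by
    rw [isNoninversion_comp_castSucc]
    exact and_iff_left ⟨j.castSucc_lt_last, hlast j⟩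
  constructor
  · rintro ⟨a, b, c, h⟩
    obtain ⟨hab, hbc⟩ := (h a b c).2 ⟨rfl, rfl, rfl⟩
    obtain ⟨b, rfl⟩ := Fin.exists_castSucc_eq.2 hbc.1.ne_top
    obtain ⟨a, rfl⟩ := Fin.exists_castSucc_eq.2 hab.1.ne_top
    obtain rfl : Fin.last n = c :=
      ((h _ _ _).1 ((append a b).2 (isNoninversion_comp_castSucc.2 hab))).2.2
    exact ⟨a, b, fun i j => by rw [← append, h]; simp⟩
  · rintro ⟨a, b, h⟩
    refine ⟨a.castSucc, b.castSucc, Fin.last n, fun i j k => ⟨fun ⟨hij, hjk⟩ => ?_, ?_⟩⟩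
    · obtain ⟨j, rfl⟩ := Fin.exists_castSucc_eq.2 hjk.1.ne_top
      obtain ⟨i, rfl⟩ := Fin.exists_castSucc_eq.2 hij.1.ne_top
      obtain ⟨rfl, rfl⟩ := (h i j).1 (isNoninversion_comp_castSucc.2 hij)
      refine ⟨rfl, rfl, by_contra fun hk => ?_⟩
      obtain ⟨k, rfl⟩ := Fin.exists_castSucc_eq.2 hk
      exact hij.1.ne' (congrArg _ ((h j k).1 (isNoninversion_comp_castSucc.2 hjk)).1)
    · rintro ⟨rfl, rfl, rfl⟩
      exact (append a b).2 ((h a b).2 ⟨rfl, rfl⟩)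

end RemoveExtremum

section Occurrences

/-- The positions `f` form an occurrence of the pattern `α` in `π`; `occCount α π` counts these. -/
def IsOccurrence {k n : ℕ} (α : Equiv.Perm (Fin k)) (π : Equiv.Perm (Fin n)) (f : Fin k → Fin n) :
    Prop :=
  StrictMono f ∧ ∀ a b : Fin k, α a < α b ↔ π (f a) < π (f b)

variable {k n : ℕ} {α : Equiv.Perm (Fin k)} {π : Equiv.Perm (Fin n)}

theorem avoids_iff_forall_not_isOccurrence : avoids α π ↔ ∀ f, ¬ IsOccurrence α π f := by
  rw [avoids, occCount, Finite.card_eq_zero_iff, isEmpty_subtype]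
  rfl

theorem containsOnce_iff_existsUnique_isOccurrence :
    containsOnce α π ↔ ∃! f, IsOccurrence α π f := by
  simp only [containsOnce, occCount, Nat.card_eq_one_iff_exists, Subtype.exists, Subtype.forall,
    Subtype.mk.injEq, exists_prop]
  rfl

theorem isOccurrence_p312_iff {f : Fin 3 → Fin n} :
    IsOccurrence p312 π f ↔
      f 0 < f 1 ∧ f 1 < f 2 ∧ π (f 1) < π (f 2) ∧ π (f 2) < π (f 0) := by
  constructor
  · rintro ⟨hf, hp⟩
    exact ⟨hf (by decide), hf (by decide), (hp 1 2).1 (by decide), (hp 2 0).1 (by decide)⟩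
  · rintro ⟨h01, h12, hπ12, hπ20⟩
    refine ⟨Fin.strictMono_iff_lt_succ.2 (Fin.forall_fin_two.2 ⟨h01, h12⟩), fun a b => ?_⟩
    fin_cases a <;> fin_cases b <;>
      simp [p312, hπ12, hπ20, hπ12.trans hπ20, hπ12.le, hπ20.le, (hπ12.trans hπ20).le]

theorem isOccurrence_p123_iff {f : Fin 3 → Fin n} :
    IsOccurrence p123 π f ↔ IsIncreasingTriple π (f 0) (f 1) (f 2) := by
  constructor
  · rintro ⟨hf, hp⟩
    exact ⟨⟨hf (by decide), (hp 0 1).1 (by decide)⟩, hf (by decide), (hp 1 2).1 (by decide)⟩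
  · rintro ⟨⟨h01, hπ01⟩, h12, hπ12⟩
    refine ⟨Fin.strictMono_iff_lt_succ.2 (Fin.forall_fin_two.2 ⟨h01, h12⟩), fun a b => ?_⟩
    fin_cases a <;> fin_cases b <;>
      simp [p123, hπ01, hπ12, hπ01.trans hπ12, hπ01.le, hπ12.le, (hπ01.trans hπ12).le]

theorem avoids_p312_iff : avoids p312 π ↔ Avoids312 π := by
  simp only [avoids_iff_forall_not_isOccurrence, isOccurrence_p312_iff]
  exact ⟨fun h i j k hij hjk hπjk hπki => h ![i, j, k] ⟨hij, hjk, hπjk, hπki⟩,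
    fun h f ⟨h01, h12, hπ12, hπ20⟩ => h _ _ _ h01 h12 hπ12 hπ20⟩

theorem containsOnce_p123_iff : containsOnce p123 π ↔ HasUniqueIncreasingTriple π := by
  simp only [containsOnce_iff_existsUnique_isOccurrence, isOccurrence_p123_iff]
  constructor
  · rintro ⟨f, hf, huniq⟩
    refine ⟨f 0, f 1, f 2, fun i j k => ⟨fun h => ?_, ?_⟩⟩
    · obtain rfl := huniq ![i, j, k] h
      exact ⟨rfl, rfl, rfl⟩
    · rintro ⟨rfl, rfl, rfl⟩
      exact hf
  · rintro ⟨a, b, c, h⟩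
    refine ⟨![a, b, c], (h a b c).2 ⟨rfl, rfl, rfl⟩, fun f hf => ?_⟩
    obtain ⟨h0, h1, h2⟩ := (h _ _ _).1 hf
    ext x
    fin_cases x <;> simp [h0, h1, h2]

theorem mem_SnAvoidContain_p312_p123_iff :
    π ∈ SnAvoidContain p312 p123 n ↔ Avoids312 π ∧ HasUniqueIncreasingTriple π :=
  and_congr avoids_p312_iff containsOnce_p123_iff

end Occurrences

section Phi

variable {m : ℕ} (π : Equiv.Perm (Fin m))

theorem phi_castSucc (i : Fin m) : phi π i.castSucc = (π i).succ := by
  simp [phi]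

theorem phi_last : phi π (Fin.last m) = 0 := by
  simp [phi]

theorem range_phi : Set.range (phi (m := m)) = {σ | σ (Fin.last m) = 0} := by
  ext σ
  refine ⟨fun ⟨π, hπ⟩ => hπ ▸ phi_last π, fun (hσ : σ (Fin.last m) = 0) => ?_⟩
  have hne (i : Fin m) : σ i.castSucc ≠ 0 := hσ ▸ σ.injective.ne i.castSucc_ne_last
  let g (i : Fin m) : Fin m := (σ i.castSucc).pred (hne i)
  have hg : g.Injective := fun i j hij =>
    Fin.castSucc_injective m (σ.injective (Fin.pred_inj.1 hij))
  refine ⟨Equiv.ofBijective g (Finite.injective_iff_bijective.1 hg), Equiv.ext fun i => ?_⟩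
  cases i using Fin.lastCases with
  | last => rw [phi_last, hσ]
  | cast i => simp [phi_castSucc, g]

variable {π} {k : ℕ} {α : Equiv.Perm (Fin (k + 1))}

theorem isOccurrence_phi_castSucc_comp {k : ℕ} {α : Equiv.Perm (Fin k)} {f : Fin k → Fin m} :
    IsOccurrence α (phi π) (Fin.castSucc ∘ f) ↔ IsOccurrence α π f := by
  simp only [IsOccurrence, StrictMono, Function.comp_apply, Fin.castSucc_lt_castSucc_iff,
    phi_castSucc, Fin.succ_lt_succ_iff]

theorem IsOccurrence.exists_castSucc_comp (hα : α (Fin.last k) ≠ 0) {f : Fin (k + 1) → Fin (m + 1)}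
    (hf : IsOccurrence α (phi π) f) : ∃ g, Fin.castSucc ∘ g = f := by
  have hlast : f (Fin.last k) ≠ Fin.last m := fun hlast => by
    have hlt : phi π (f (α.symm 0)) < phi π (f (Fin.last k)) :=
      (hf.2 _ _).1 (by simpa [Fin.pos_iff_ne_zero] using hα)
    rw [hlast, phi_last] at hlt
    exact Fin.not_lt_zero _ hlt
  have hne (i : Fin (k + 1)) : f i ≠ Fin.last m :=
    ((hf.1.monotone (Fin.le_last i)).trans_lt (Fin.lt_last_iff_ne_last.2 hlast)).ne
  exact ⟨fun i => (f i).castPred (hne i), funext fun i => Fin.castSucc_castPred _ (hne i)⟩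

theorem occCount_phi (hα : α (Fin.last k) ≠ 0) : occCount α (phi π) = occCount α π := by
  let extend (g : {g // IsOccurrence α π g}) : {f // IsOccurrence α (phi π) f} :=
    ⟨Fin.castSucc ∘ g, isOccurrence_phi_castSucc_comp.2 g.2⟩
  refine (Nat.card_eq_of_bijective extend ⟨fun g g' h => ?_, fun ⟨f, hf⟩ => ?_⟩).symm
  · exact Subtype.ext ((Fin.castSucc_injective m).comp_left (congrArg Subtype.val h))
  · obtain ⟨g, rfl⟩ := hf.exists_castSucc_comp hα
    exact ⟨⟨g, isOccurrence_phi_castSucc_comp.1 hf⟩, rfl⟩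

theorem phi_mem_SnAvoidContain_iff {α β : Equiv.Perm (Fin 3)} (hα : α 2 ≠ 0) (hβ : β 2 ≠ 0) :
    phi π ∈ SnAvoidContain α β (m + 1) ↔ π ∈ SnAvoidContain α β m := by
  simp only [SnAvoidContain, Set.mem_ofPred_eq, avoids, containsOnce, occCount_phi hα,
    occCount_phi hβ]

theorem mem_image_phi_iff {α β : Equiv.Perm (Fin 3)} (hα : α 2 ≠ 0) (hβ : β 2 ≠ 0)
    {σ : Equiv.Perm (Fin (m + 1))} :
    σ ∈ phi '' SnAvoidContain α β m ↔ σ ∈ SnAvoidContain α β (m + 1) ∧ σ (Fin.last m) = 0 := by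
  constructor
  · rintro ⟨π, hπ, rfl⟩
    exact ⟨(phi_mem_SnAvoidContain_iff hα hβ).2 hπ, phi_last π⟩
  · rintro ⟨hσ, hlast⟩
    obtain ⟨π, rfl⟩ := range_phi.ge hlast
    exact ⟨π, (phi_mem_SnAvoidContain_iff hα hβ).1 hσ, rfl⟩

end Phi

theorem apply_last_eq_zero_or_apply_zero_eq_zero_or_apply_last_eq_last {m : ℕ}
    {σ : Equiv.Perm (Fin (m + 1))} (hσ : σ ∈ SnAvoidContain p312 p123 (m + 1)) :
    σ (Fin.last m) = 0 ∨ σ 0 = 0 ∨ σ (Fin.last m) = Fin.last m := by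
  obtain ⟨h312, h123⟩ := mem_SnAvoidContain_p312_p123_iff.1 hσ
  obtain ⟨k, hk⟩ := σ.surjective 0
  rcases eq_bot_or_eq_top_or_forall_le_top σ.injective h312 h123
    (fun i => hk ▸ Fin.zero_le (σ i)) with rfl | rfl | hmax
  · exact .inr (.inl hk)
  · exact .inl hk
  · refine .inr (.inr (Fin.last_le_iff.1 ?_))
    exact (σ.apply_symm_apply _).ge.trans (hmax (σ.symm (Fin.last m)))

section ExtremalEnds

variable {n : ℕ} {σ : Equiv.Perm (Fin (n + 3))}

theorem mem_SnAvoidContain_and_apply_zero_eq_zero_iff :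
    σ ∈ SnAvoidContain p312 p123 (n + 3) ∧ σ 0 = 0 ↔
      σ 0 = 0 ∧ ∀ i j, IsNoninversion (σ ∘ Fin.succ) i j ↔ i = 0 ∧ j = 1 := by
  rw [and_comm, and_congr_right_iff]
  intro h0
  have hpos (i : Fin (n + 2)) : σ 0 < σ i.succ := by
    rw [h0, Fin.pos_iff_ne_zero, ← h0]
    exact σ.injective.ne i.succ_ne_zero
  rw [mem_SnAvoidContain_p312_p123_iff,
    avoids312_iff_comp_succ fun i => h0.trans_le (Fin.zero_le _),
    hasUniqueIncreasingTriple_iff_comp_succ hpos,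
    avoids312_and_hasUniqueNoninversion_iff (σ.injective.comp (Fin.succ_injective _))]

theorem mem_SnAvoidContain_and_apply_last_eq_last_iff :
    σ ∈ SnAvoidContain p312 p123 (n + 3) ∧ σ (Fin.last (n + 2)) = Fin.last (n + 2) ↔
      σ (Fin.last (n + 2)) = Fin.last (n + 2) ∧
        ∀ i j, IsNoninversion (σ ∘ Fin.castSucc) i j ↔ i = 0 ∧ j = 1 := by
  rw [and_comm, and_congr_right_iff]
  intro hlast
  have hlt (i : Fin (n + 2)) : σ i.castSucc < σ (Fin.last (n + 2)) := by
    rw [hlast, Fin.lt_last_iff_ne_last, ← hlast]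
    exact σ.injective.ne i.castSucc_ne_last
  rw [mem_SnAvoidContain_p312_p123_iff,
    avoids312_iff_comp_castSucc fun i => (Fin.le_last _).trans_eq hlast.symm,
    hasUniqueIncreasingTriple_iff_comp_castSucc hlt,
    avoids312_and_hasUniqueNoninversion_iff (σ.injective.comp (Fin.castSucc_injective _))]

end ExtremalEnds

section Words

theorem hasWord_of_forall_lt {n : ℕ} {σ : Equiv.Perm (Fin n)} {w : ℕ → ℕ}
    (hw : ∀ i : Fin n, w (i + 1) ∈ Set.Icc 1 n)
    (hlt : ∀ i j, σ i < σ j → w (i + 1) < w (j + 1)) : hasWord σ w := by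
  let g (v : Fin n) : Fin n :=
    ⟨w (σ.symm v + 1) - 1, by have := hw (σ.symm v); grind⟩
  have hg : StrictMono g := fun u v huv => by
    have := hlt (σ.symm u) (σ.symm v) (by simpa using huv)
    have := (hw (σ.symm u)).1
    simp only [g, Fin.mk_lt_mk]
    lia
  intro i
  have hgi : g (σ i) = σ i := le_antisymm hg.apply_le hg.le_apply
  have := (hw i).1
  rw [← hgi]
  simp only [g, Equiv.symm_apply_apply]
  lia

variable {n : ℕ} {σ : Equiv.Perm (Fin (n + 3))}

theorem hasWord_min_first_iff :
    hasWord σ (fun j =>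
        if j = 1 then 1 else if j = 2 then n + 2
        else if j = 3 then n + 2 + 1 else n + 2 + 3 - j) ↔
      σ 0 = 0 ∧ ∀ i j, IsNoninversion (σ ∘ Fin.succ) i j ↔ i = 0 ∧ j = 1 := by
  constructor
  · intro h
    refine ⟨Fin.ext (by simpa using h 0), fun i j => ?_⟩
    have hi := h i.succ
    have hj := h j.succ
    simp only [IsNoninversion, Function.comp_apply, Fin.lt_def, Fin.ext_iff, Fin.val_succ,
      Fin.val_zero, Fin.val_one] at hi hj ⊢
    split_ifs at hi hj <;> lia
  · rintro ⟨h0, h⟩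
    refine hasWord_of_forall_lt (fun i => ?_) (fun i j hij => ?_)
    · have := i.isLt
      rw [Set.mem_Icc]
      split_ifs <;> lia
    · cases j using Fin.cases with
      | zero => simp [h0] at hij
      | succ j =>
        cases i using Fin.cases with
        | zero =>
          simp only [Fin.val_zero, Fin.val_succ]
          split_ifs <;> lia
        | succ i =>
          have hord := eq_and_eq_or_lt_of_unique_noninversion h hij
          simp only [Fin.lt_def, Fin.ext_iff, Fin.val_succ, Fin.val_zero, Fin.val_one] at hord ⊢
          split_ifs <;> lia

theorem hasWord_max_last_iff :
    hasWord σ (fun j =>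
        if j = 1 then n + 2 - 1 else if j = 2 then n + 2
        else if j = n + 2 + 1 then n + 2 + 1 else n + 2 + 1 - j) ↔
      σ (Fin.last (n + 2)) = Fin.last (n + 2) ∧
        ∀ i j, IsNoninversion (σ ∘ Fin.castSucc) i j ↔ i = 0 ∧ j = 1 := by
  constructor
  · intro h
    refine ⟨Fin.ext (by simpa using h (Fin.last _)), fun i j => ?_⟩
    have hi := h i.castSucc
    have hj := h j.castSucc
    simp only [IsNoninversion, Function.comp_apply, Fin.lt_def, Fin.ext_iff, Fin.val_castSucc,
      Fin.val_zero, Fin.val_one] at hi hj ⊢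
    split_ifs at hi hj <;> lia
  · rintro ⟨hlast, h⟩
    refine hasWord_of_forall_lt (fun i => ?_) (fun i j hij => ?_)
    · have := i.isLt
      rw [Set.mem_Icc]
      split_ifs <;> lia
    · cases i using Fin.lastCases with
      | last => exact absurd hij (hlast.ge.trans' (Fin.le_last _)).not_gt
      | cast i =>
        cases j using Fin.lastCases with
        | last =>
          simp only [Fin.val_last, Fin.val_castSucc]
          split_ifs <;> lia
        | cast j =>
          have hord := eq_and_eq_or_lt_of_unique_noninversion h hij
          simp only [Fin.lt_def, Fin.ext_iff, Fin.val_castSucc, Fin.val_zero, Fin.val_one]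
            at hord ⊢
          split_ifs <;> lia

end Words

/-- Generating rule for `S_n(312;123)`, `n = m+1 ≥ 4`:
`S_n(312;123) = φ(S_{n−1}(312;123)) ∪ {1 (n−1) n (n−2)(n−3) ⋯ 3 2, (n−2)(n−1)(n−3)(n−4) ⋯ 2 1 n}`. -/
theorem generating_rule_312_123 :
    ∀ m : ℕ, 4 ≤ m + 1 →
      SnAvoidContain p312 p123 (m + 1) =
        phi '' SnAvoidContain p312 p123 m ∪
          {σ | hasWord σ (fun j =>
            if j = 1 then 1 else if j = 2 then m
            else if j = 3 then m + 1 else m + 3 - j)} ∪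
          {σ | hasWord σ (fun j =>
            if j = 1 then m - 1 else if j = 2 then m
            else if j = m + 1 then m + 1 else m + 1 - j)} := by
  intro m hm
  obtain ⟨n, rfl⟩ : ∃ n, m = n + 2 := Nat.exists_eq_add_of_le' (by lia)
  ext σ
  rw [Set.mem_union, Set.mem_union, mem_image_phi_iff (by decide) (by decide), Set.mem_ofPred_eq,
    Set.mem_ofPred_eq, hasWord_min_first_iff, ← mem_SnAvoidContain_and_apply_zero_eq_zero_iff,
    hasWord_max_last_iff, ← mem_SnAvoidContain_and_apply_last_eq_last_iff,
    ← and_or_left, ← and_or_left, or_assoc, iff_self_and]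
  exact apply_last_eq_zero_or_apply_zero_eq_zero_or_apply_last_eq_last
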